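/- Fix real α, β > −1, j ∈ ℕ with j ≥ 1, γ ∈ ℝ, M > 0, and a sequence M_n ≥ 0 with lim_{n→∞} M_n n^γ = M. If γ > 2(α+2j+1), then there exists N such that for all n ≥ N every real zero of Q_n lies in the open interval (−1, 1). -/

import Mathlib

open Polynomial Filter

/-- The Jacobi polynomial `P_n^{(α,β)}` as a real polynomial. -/
noncomputable def jacobiP (α β : ℝ) (n : ℕ) : Polynomial ℝ :=
  ∑ k ∈ Finset.range (n + 1),
    Polynomial.C (Real.Gamma (n + α + 1) / (Real.Gamma ((n : ℝ) - k + 1) * Real.Gamma (α + k + 1)) *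
        (Real.Gamma (n + β + 1) / (Real.Gamma ((k : ℝ) + 1) * Real.Gamma ((n : ℝ) - k + β + 1)))) *
      (Polynomial.C (2⁻¹ : ℝ) * (Polynomial.X - 1)) ^ k *
      (Polynomial.C (2⁻¹ : ℝ) * (Polynomial.X + 1)) ^ (n - k)

/-- The squared Jacobi norm `‖P_n^{(α,β)}‖²`. -/
noncomputable def jacobiNormSq (α β : ℝ) (n : ℕ) : ℝ :=
  ∫ x in (-1 : ℝ)..1, (jacobiP α β n).eval x ^ 2 * (1 - x) ^ α * (1 + x) ^ β

/-- The kernel `K_n^{(j,k)}(x,y)`. -/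
noncomputable def kernK (α β : ℝ) (j k n : ℕ) (x y : ℝ) : ℝ :=
  ∑ i ∈ Finset.range (n + 1),
    (Polynomial.derivative^[j] (jacobiP α β i)).eval x *
      (Polynomial.derivative^[k] (jacobiP α β i)).eval y / jacobiNormSq α β i

/-- The kernel `K_n^{(j,0)}(1,·)` as a polynomial. -/
noncomputable def kernKPoly (α β : ℝ) (j n : ℕ) : Polynomial ℝ :=
  ∑ i ∈ Finset.range (n + 1),
    Polynomial.C ((Polynomial.derivative^[j] (jacobiP α β i)).eval 1 / jacobiNormSq α β i) *
      jacobiP α β i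

/-- The varying Sobolev inner product `(f,g)_{S,n}` with mass `m`. -/
noncomputable def sobInner (α β : ℝ) (j : ℕ) (m : ℝ) (f g : Polynomial ℝ) : ℝ :=
  (∫ x in (-1 : ℝ)..1, f.eval x * g.eval x * (1 - x) ^ α * (1 + x) ^ β) +
    m * (Polynomial.derivative^[j] f).eval 1 * (Polynomial.derivative^[j] g).eval 1

/-- The Jacobi–Sobolev orthogonal polynomial `Q_n`. -/
noncomputable def sobQ (α β : ℝ) (j : ℕ) (Ms : ℕ → ℝ) (n : ℕ) : Polynomial ℝ :=
  jacobiP α β n -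
    Polynomial.C (Ms n * (Polynomial.derivative^[j] (jacobiP α β n)).eval 1 /
        (1 + Ms n * kernK α β j j (n - 1) 1 1)) *
      kernKPoly α β j (n - 1)


/-!
On a point `x ≥ 1` the ratios `P_n(x) / P_n(1)` increase with `n`, and by the reflection
`P_n^{(α,β)}(-x) = (-1)^n P_n^{(β,α)}(x)` so do the ratios `|P_n(x)| / P_n^{(β,α)}(1)` for `x ≤ -1`.
Hence outside `(-1, 1)` the kernel `K_{n-1}^{(j,0)}(1, x)` is, uniformly in `x`, at most `|P_n(x)|`
times a quotient which depends only on `n`. As `P_n^{(j)}(1) = O(n^(α+2j))` and `‖P_n‖⁻² = O(n)`,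
the correction term in `Q_n(x)` is then at most `|P_n(x)|` times `O(M_n n^(2(α+2j+1))) = o(1)`, so
that `Q_n(x) ≠ 0`.

The norms come without orthogonality: the derivative maps `P_{n+1}^{(α,β)}` to a multiple of
`P_n^{(α+1,β+1)}`, its formal adjoint maps it back, and integration by parts therefore expresses the
norm of the former through the norm of the latter.
-/


open Asymptotics Topology
open Finset.HasAntidiagonal (antidiagonal mem_antidiagonal)

/-! ### Powers and Gamma quotients along the natural numbers -/

theorem isEquivalent_natCast_add (c : ℝ) : (fun n : ℕ => (n : ℝ) + c) ~[atTop] fun n => (n : ℝ) :=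
  IsEquivalent.refl.add_isLittleO <| isLittleO_const_left.2 <| .inr <|
    tendsto_norm_atTop_atTop.comp tendsto_natCast_atTop_atTop

theorem isEquivalent_natCast_succ_rpow (s : ℝ) :
    (fun n : ℕ => ((n + 1 : ℕ) : ℝ) ^ s) ~[atTop] fun n => (n : ℝ) ^ s := by
  have hne : ∀ᶠ n : ℕ in atTop, (n : ℝ) ^ s ≠ 0 := by
    filter_upwards [eventually_gt_atTop 0] with n hn
    positivity
  rw [isEquivalent_iff_tendsto_one hne]
  have hratio : Tendsto (fun n : ℕ => (1 + 1 / (n : ℝ)) ^ s) atTop (𝓝 1) := by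
    simpa using ((tendsto_one_div_atTop_nhds_zero_nat (𝕜 := ℝ)).const_add 1).rpow_const
      (p := s) (.inl (by norm_num))
  refine hratio.congr' ?_
  filter_upwards [eventually_gt_atTop 0] with n hn
  have hn' : (0 : ℝ) < n := by exact_mod_cast hn
  rw [Pi.div_apply, ← Real.div_rpow (by positivity) hn'.le]
  congr 1
  push_cast
  field_simp

theorem isBigO_natCast_rpow_of_succ {f : ℕ → ℝ} {s : ℝ}
    (h : (fun n => f (n + 1)) =O[atTop] fun n : ℕ => (n : ℝ) ^ s) :
    f =O[atTop] fun n : ℕ => (n : ℝ) ^ s := by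
  rw [← map_add_atTop_eq_nat 1, isBigO_map]
  exact h.trans (isEquivalent_natCast_succ_rpow s).isBigO_symm

theorem natCast_rpow_mul_eventuallyEq (s t : ℝ) :
    (fun n : ℕ => (n : ℝ) ^ s * (n : ℝ) ^ t) =ᶠ[atTop] fun n => (n : ℝ) ^ (s + t) := by
  filter_upwards [eventually_gt_atTop 0] with n hn
  rw [Real.rpow_add (by exact_mod_cast hn)]

theorem tendsto_mul_natCast_rpow_zero {u : ℕ → ℝ} {M γ p : ℝ}
    (hu : Tendsto (fun n : ℕ => u n * (n : ℝ) ^ γ) atTop (𝓝 M)) (hp : p < γ) :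
    Tendsto (fun n : ℕ => u n * (n : ℝ) ^ p) atTop (𝓝 0) := by
  have hneg : Tendsto (fun n : ℕ => (n : ℝ) ^ (-(γ - p))) atTop (𝓝 0) :=
    (tendsto_rpow_neg_atTop (by linarith)).comp tendsto_natCast_atTop_atTop
  have hmul := hu.mul hneg
  rw [mul_zero] at hmul
  refine hmul.congr' ?_
  filter_upwards [natCast_rpow_mul_eventuallyEq γ (-(γ - p))] with n hn
  rw [mul_assoc, hn]
  congr 2
  ring

-- Bernoulli's inequality makes the sum of `(i + 1) ^ s` telescope when `s ≤ 0`.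
theorem sum_natCast_succ_rpow_le {s : ℝ} (hs : -1 < s) (n : ℕ) :
    ∑ i ∈ Finset.range n, ((i : ℝ) + 1) ^ s ≤ max 1 (s + 1)⁻¹ * (n : ℝ) ^ (s + 1) := by
  rcases le_total 0 s with h0 | h0
  · calc ∑ i ∈ Finset.range n, ((i : ℝ) + 1) ^ s ≤ ∑ _i ∈ Finset.range n, (n : ℝ) ^ s := by
          refine Finset.sum_le_sum fun i hi => Real.rpow_le_rpow (by positivity) ?_ h0
          exact_mod_cast Finset.mem_range.1 hi
      _ = 1 * (n : ℝ) ^ (s + 1) := by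
          rw [Finset.sum_const, Finset.card_range, nsmul_eq_mul, one_mul,
            Real.rpow_add_one' n.cast_nonneg (by linarith), mul_comm]
      _ ≤ _ := by gcongr; exact le_max_left _ _
  · have hs1 : 0 < s + 1 := by linarith
    have hstep (i : ℕ) : ((i : ℝ) + 1) ^ s ≤
        (s + 1)⁻¹ * (((i + 1 : ℕ) : ℝ) ^ (s + 1) - (i : ℝ) ^ (s + 1)) := by
      have hi : (0 : ℝ) < (i : ℝ) + 1 := by positivity
      have hbernoulli := rpow_one_add_le_one_add_mul_self (s := -((i : ℝ) + 1)⁻¹) (p := s + 1)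
        (by rw [neg_le_neg_iff]; exact inv_le_one_of_one_le₀ (by simp)) hs1.le (by linarith)
      have hbase : 1 + -((i : ℝ) + 1)⁻¹ = i / (i + 1) := by field_simp; ring
      rw [hbase, Real.div_rpow i.cast_nonneg hi.le, div_le_iff₀ (by positivity),
        Real.rpow_add_one hi.ne'] at hbernoulli
      rw [le_inv_mul_iff₀ hs1, Nat.cast_succ, Real.rpow_add_one hi.ne']
      have : (1 + (s + 1) * -((i : ℝ) + 1)⁻¹) * (((i : ℝ) + 1) ^ s * (i + 1)) =
          ((i : ℝ) + 1) ^ s * (i + 1) - (s + 1) * ((i : ℝ) + 1) ^ s := by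
        field_simp
        ring
      linarith
    calc ∑ i ∈ Finset.range n, ((i : ℝ) + 1) ^ s
        ≤ ∑ i ∈ Finset.range n,
            (s + 1)⁻¹ * (((i + 1 : ℕ) : ℝ) ^ (s + 1) - (i : ℝ) ^ (s + 1)) :=
          Finset.sum_le_sum fun i _ => hstep i
      _ = (s + 1)⁻¹ * (n : ℝ) ^ (s + 1) := by
          rw [← Finset.mul_sum, Finset.sum_range_sub fun i : ℕ => (i : ℝ) ^ (s + 1), Nat.cast_zero,
            Real.zero_rpow hs1.ne', sub_zero]
      _ ≤ _ := by gcongr; exact le_max_right _ _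

theorem isBigO_sum_range_natCast_rpow {f : ℕ → ℝ} {s : ℝ} (hs : -1 < s)
    (hf : f =O[atTop] fun n : ℕ => (n : ℝ) ^ s) :
    (fun n => ∑ i ∈ Finset.range n, f i) =O[atTop] fun n : ℕ => (n : ℝ) ^ (s + 1) := by
  obtain ⟨C, hC, hle⟩ := bound_of_isBigO_nat_atTop
    (hf.trans (isEquivalent_natCast_succ_rpow s).isBigO_symm)
  refine IsBigO.of_bound (C * max 1 (s + 1)⁻¹) (.of_forall fun n => ?_)
  calc ‖∑ i ∈ Finset.range n, f i‖
      ≤ ∑ i ∈ Finset.range n, C * ((i : ℝ) + 1) ^ s := by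
        refine norm_sum_le_of_le _ fun i _ => (hle (by positivity)).trans_eq ?_
        rw [Nat.cast_succ, Real.norm_of_nonneg (by positivity)]
    _ ≤ C * (max 1 (s + 1)⁻¹ * (n : ℝ) ^ (s + 1)) := by
        rw [← Finset.mul_sum]
        gcongr
        exact sum_natCast_succ_rpow_le hs n
    _ = C * max 1 (s + 1)⁻¹ * ‖(n : ℝ) ^ (s + 1)‖ := by
        rw [Real.norm_of_nonneg (by positivity), mul_assoc]

theorem prod_range_add_mul_Gamma {s : ℝ} (hs : 0 < s) (n : ℕ) :
    (∏ i ∈ Finset.range n, (s + i)) * Real.Gamma s = Real.Gamma (s + n) := by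
  induction n with
  | zero => simp
  | succ n ih =>
    rw [Finset.prod_range_succ, mul_right_comm, ih, Nat.cast_succ, ← add_assoc,
      Real.Gamma_add_one (by positivity), mul_comm]

theorem isEquivalent_Gamma_natCast_add_add_one {s : ℝ} (hs : 0 < s) :
    (fun n : ℕ => Real.Gamma (n + s + 1)) ~[atTop]
      fun n : ℕ => (n.factorial : ℝ) * (n : ℝ) ^ s := by
  have hΓ : Real.Gamma s ≠ 0 := (Real.Gamma_pos_of_pos hs).ne'
  have hseq (n : ℕ) : (Real.GammaSeq s n / Real.Gamma s)⁻¹ =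
      Real.Gamma (n + s + 1) / ((n.factorial : ℝ) * (n : ℝ) ^ s) := by
    have harg : (n : ℝ) + s + 1 = s + (n + 1 : ℕ) := by push_cast; ring
    rw [harg, ← prod_range_add_mul_Gamma hs, Real.GammaSeq, div_div, inv_div, mul_comm (_ ^ s)]
  refine isEquivalent_of_tendsto_one ?_
  have hlim := ((Real.GammaSeq_tendsto_Gamma s).div_const (Real.Gamma s)).inv₀
    (div_ne_zero hΓ hΓ)
  rw [div_self hΓ, inv_one] at hlim
  exact hlim.congr hseq

theorem isEquivalent_Gamma_natCast_add_of_add_one {s : ℝ}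
    (h : (fun n : ℕ => Real.Gamma (n + s + 1)) ~[atTop]
      fun n : ℕ => (n.factorial : ℝ) * (n : ℝ) ^ s) :
    (fun n : ℕ => Real.Gamma (n + s)) ~[atTop]
      fun n : ℕ => (n.factorial : ℝ) * (n : ℝ) ^ (s - 1) := by
  refine ((h.div (isEquivalent_natCast_add s)).congr_left ?_).congr_right ?_
  · filter_upwards [eventually_gt_atTop ⌈-s⌉₊] with n hn
    have hpos : 0 < (n : ℝ) + s := by linarith [Nat.lt_of_ceil_lt hn]
    rw [Pi.div_apply, Real.Gamma_add_one hpos.ne', mul_div_cancel_left₀ _ hpos.ne']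
  · filter_upwards [eventually_gt_atTop 0] with n hn
    have hn' : (n : ℝ) ≠ 0 := by positivity
    rw [Pi.div_apply, Real.rpow_sub_one hn', mul_div_assoc]

theorem isEquivalent_Gamma_natCast_add (s : ℝ) :
    (fun n : ℕ => Real.Gamma (n + s)) ~[atTop]
      fun n : ℕ => (n.factorial : ℝ) * (n : ℝ) ^ (s - 1) := by
  suffices h : ∀ (k : ℕ) (s : ℝ), 0 < s + k →
      (fun n : ℕ => Real.Gamma (n + s)) ~[atTop]
        fun n : ℕ => (n.factorial : ℝ) * (n : ℝ) ^ (s - 1) by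
    exact h (⌈-s⌉₊ + 1) s (by push_cast; linarith [Nat.le_ceil (-s)])
  intro k
  induction k with
  | zero =>
    intro s hs
    exact isEquivalent_Gamma_natCast_add_of_add_one
      (isEquivalent_Gamma_natCast_add_add_one (by simpa using hs))
  | succ k ih =>
    intro s hs
    refine isEquivalent_Gamma_natCast_add_of_add_one ?_
    simpa only [add_assoc, add_sub_cancel_right] using ih (s + 1) (by push_cast at hs; linarith)

/-! ### Coefficients -/

section Coefficients

variable {α β : ℝ}

/-- The coefficient of `((x - 1) / 2) ^ k * ((x + 1) / 2) ^ l` in `P_{k+l}^{(α,β)}`. The degree is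
encoded as `k + l`, so that no subtraction occurs. -/
noncomputable def jacobiCoeff (α β : ℝ) (k l : ℕ) : ℝ :=
  Real.Gamma (k + l + α + 1) / (l.factorial * Real.Gamma (k + α + 1)) *
    (Real.Gamma (k + l + β + 1) / (k.factorial * Real.Gamma (l + β + 1)))

theorem natCast_add_add_one_pos (hα : -1 < α) (n : ℕ) : 0 < (n : ℝ) + α + 1 := by
  have := n.cast_nonneg (α := ℝ)
  linarith

theorem Gamma_natCast_add_add_one_pos (hα : -1 < α) (n : ℕ) : 0 < Real.Gamma (n + α + 1) :=
  Real.Gamma_pos_of_pos (natCast_add_add_one_pos hα n)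

theorem Gamma_natCast_succ_add_add_one (hα : -1 < α) (n : ℕ) :
    Real.Gamma ((n + 1 : ℕ) + α + 1) = (n + α + 1) * Real.Gamma (n + α + 1) := by
  rw [← Real.Gamma_add_one (natCast_add_add_one_pos hα n).ne']
  push_cast
  ring_nf

theorem jacobiCoeff_pos (hα : -1 < α) (hβ : -1 < β) (k l : ℕ) : 0 < jacobiCoeff α β k l := by
  have hα' := Gamma_natCast_add_add_one_pos hα
  have hβ' := Gamma_natCast_add_add_one_pos hβ
  have hαkl := hα' (k + l)
  have hβkl := hβ' (k + l)
  push_cast at hαkl hβkl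
  have := hα' k
  have := hβ' l
  unfold jacobiCoeff
  positivity

theorem jacobiCoeff_swap (α β : ℝ) (k l : ℕ) : jacobiCoeff α β k l = jacobiCoeff β α l k := by
  rw [jacobiCoeff, jacobiCoeff, mul_comm, add_comm (k : ℝ)]

theorem succ_mul_jacobiCoeff_succ_right (hα : -1 < α) (β : ℝ) (k l : ℕ) :
    (l + 1) * jacobiCoeff α β k (l + 1) = (k + α + 1) * jacobiCoeff (α + 1) (β + 1) k l := by
  have hk := Gamma_natCast_succ_add_add_one hα k
  have hΓ := (Gamma_natCast_add_add_one_pos hα k).ne'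
  have hk0 := (natCast_add_add_one_pos hα k).ne'
  have h1 : (k : ℝ) + (α + 1) + 1 = (k + 1 : ℕ) + α + 1 := by push_cast; ring
  have h2 (s : ℝ) : (k : ℝ) + l + (s + 1) + 1 = k + (l + 1 : ℕ) + s + 1 := by push_cast; ring
  have h3 : (l : ℝ) + (β + 1) + 1 = (l + 1 : ℕ) + β + 1 := by push_cast; ring
  rw [jacobiCoeff, jacobiCoeff, h1, h2, h2, h3, hk, Nat.factorial_succ]
  push_cast
  field_simp

theorem succ_mul_jacobiCoeff_succ_left (α : ℝ) (hβ : -1 < β) (k l : ℕ) :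
    (k + 1) * jacobiCoeff α β (k + 1) l = (l + β + 1) * jacobiCoeff (α + 1) (β + 1) k l := by
  rw [jacobiCoeff_swap, succ_mul_jacobiCoeff_succ_right hβ, jacobiCoeff_swap]

theorem jacobiCoeff_succ_right (hα : -1 < α) (hβ : -1 < β) (k l : ℕ) :
    (l + 1) * (l + β + 1) * jacobiCoeff α β k (l + 1) =
      (k + l + α + 1) * (k + l + β + 1) * jacobiCoeff α β k l := by
  have hαkl := Gamma_natCast_succ_add_add_one hα (k + l)
  have hβkl := Gamma_natCast_succ_add_add_one hβ (k + l)
  have hβl := Gamma_natCast_succ_add_add_one hβ l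
  have hΓ := (Gamma_natCast_add_add_one_pos hβ l).ne'
  have hl0 := (natCast_add_add_one_pos hβ l).ne'
  rw [add_assoc k] at hαkl hβkl
  rw [Nat.cast_add k (l + 1), Nat.cast_add k l] at hαkl hβkl
  rw [jacobiCoeff, jacobiCoeff, hαkl, hβkl, hβl, Nat.factorial_succ, Nat.cast_mul, Nat.cast_succ]
  field_simp

end Coefficients

section Expansion

variable {α β : ℝ}

/-- The polynomial `((X - 1) / 2) ^ k * ((X + 1) / 2) ^ l`; those with `k + l = n` are the basis in
which the Jacobi polynomial of degree `n` is expanded. -/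
noncomputable def jacobiBasis (k l : ℕ) : ℝ[X] :=
  (C 2⁻¹ * (X - 1)) ^ k * (C 2⁻¹ * (X + 1)) ^ l

theorem jacobiP_eq_sum_antidiagonal (α β : ℝ) (n : ℕ) :
    jacobiP α β n = ∑ p ∈ antidiagonal n,
      C (jacobiCoeff α β p.1 p.2) * jacobiBasis p.1 p.2 := by
  rw [Finset.Nat.sum_antidiagonal_eq_sum_range_succ_mk]
  refine Finset.sum_congr rfl fun k hk => ?_
  have hkn : k ≤ n := Nat.lt_succ_iff.1 (Finset.mem_range.1 hk)
  have hcast : (n : ℝ) - k = (n - k : ℕ) := (Nat.cast_sub hkn).symm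
  have hsum : (k : ℝ) + (n - k : ℕ) = n := by rw [← hcast]; ring
  rw [hcast, Real.Gamma_nat_eq_factorial, Real.Gamma_nat_eq_factorial, mul_assoc, jacobiBasis,
    jacobiCoeff, hsum, add_comm α k]

theorem eval_jacobiBasis (k l : ℕ) (x : ℝ) :
    (jacobiBasis k l).eval x = ((x - 1) / 2) ^ k * ((x + 1) / 2) ^ l := by
  simp only [jacobiBasis, eval_mul, eval_pow, eval_C, eval_sub, eval_add, eval_X, eval_one]
  ring

theorem eval_jacobiP (α β : ℝ) (n : ℕ) (x : ℝ) :
    (jacobiP α β n).eval x = ∑ p ∈ antidiagonal n,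
      jacobiCoeff α β p.1 p.2 * (((x - 1) / 2) ^ p.1 * ((x + 1) / 2) ^ p.2) := by
  simp only [jacobiP_eq_sum_antidiagonal, eval_finsetSum, eval_mul, eval_C, eval_jacobiBasis]

theorem eval_jacobiP_neg (α β : ℝ) (n : ℕ) (x : ℝ) :
    (jacobiP α β n).eval (-x) = (-1) ^ n * (jacobiP β α n).eval x := by
  rw [eval_jacobiP, eval_jacobiP, ← Finset.Nat.sum_antidiagonal_swap, Finset.mul_sum]
  refine Finset.sum_congr rfl fun p hp => ?_
  have h1 : (-x - 1) / 2 = -1 * ((x + 1) / 2) := by ring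
  have h2 : (-x + 1) / 2 = -1 * ((x - 1) / 2) := by ring
  rw [Prod.fst_swap, Prod.snd_swap, jacobiCoeff_swap, h1, h2, mul_pow, mul_pow,
    ← mem_antidiagonal.1 hp, pow_add]
  ring

theorem abs_eval_jacobiP_neg (α β : ℝ) (n : ℕ) (x : ℝ) :
    |(jacobiP α β n).eval (-x)| = |(jacobiP β α n).eval x| := by
  rw [eval_jacobiP_neg, abs_mul, abs_neg_one_pow, one_mul]

theorem eval_jacobiP_one (hβ : -1 < β) (α : ℝ) (n : ℕ) :
    (jacobiP α β n).eval 1 = Real.Gamma (n + α + 1) / (n.factorial * Real.Gamma (α + 1)) := by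
  have hΓ := (Gamma_natCast_add_add_one_pos hβ n).ne'
  rw [eval_jacobiP, Finset.sum_eq_single_of_mem (0, n) (by simp)]
  · simp [jacobiCoeff, hΓ]
  · rintro ⟨k, l⟩ hp hne
    have hk : k ≠ 0 := by
      rintro rfl
      exact hne (by simpa using hp)
    simp [hk]

theorem isTheta_eval_jacobiP_one (hα : -1 < α) (hβ : -1 < β) :
    (fun n => (jacobiP α β n).eval 1) =Θ[atTop] fun n : ℕ => (n : ℝ) ^ α := by
  have hΓ : Real.Gamma (α + 1) ≠ 0 := (Real.Gamma_pos_of_pos (by linarith)).ne'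
  have hquot : (fun n : ℕ => Real.Gamma (α + 1) * (jacobiP α β n).eval 1) ~[atTop]
      fun n : ℕ => (n : ℝ) ^ α := by
    refine (((isEquivalent_Gamma_natCast_add (α + 1)).div
      (.refl (u := fun n : ℕ => (n.factorial : ℝ)))).congr_left
        (.of_forall fun n => ?_)).congr_right (.of_forall fun n => ?_)
    · rw [Pi.div_apply, eval_jacobiP_one hβ, ← add_assoc]
      field_simp
    · rw [Pi.div_apply, add_sub_cancel_right, mul_div_cancel_left₀ _ (by positivity)]
  exact (isTheta_const_mul_left hΓ).1 hquot.isTheta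

theorem eval_jacobiP_pos (hα : -1 < α) (hβ : -1 < β) (n : ℕ) {x : ℝ} (hx : 1 ≤ x) :
    0 < (jacobiP α β n).eval x := by
  have : 0 ≤ (x - 1) / 2 := by linarith
  have : 0 < (x + 1) / 2 := by linarith
  rw [eval_jacobiP]
  refine Finset.sum_pos' (fun p _ => ?_) ⟨(0, n), by simp, ?_⟩
  · have := jacobiCoeff_pos hα hβ p.1 p.2
    positivity
  · have := jacobiCoeff_pos hα hβ 0 n
    rw [pow_zero]
    positivity

theorem eval_jacobiP_succ_one (hα : -1 < α) (hβ : -1 < β) (n : ℕ) :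
    (n + 1) * (jacobiP α β (n + 1)).eval 1 = (n + α + 1) * (jacobiP α β n).eval 1 := by
  rw [eval_jacobiP_one hβ, eval_jacobiP_one hβ, Gamma_natCast_succ_add_add_one hα,
    Nat.factorial_succ]
  push_cast
  field_simp

theorem add_mul_jacobiCoeff_le (hα : -1 < α) (hβ : -1 < β) (k l : ℕ) :
    (k + l + α + 1) * jacobiCoeff α β k l ≤ (k + l + 1) * jacobiCoeff α β k (l + 1) := by
  have hl := natCast_add_add_one_pos hβ l
  have hc := (jacobiCoeff_pos hα hβ k (l + 1)).le
  have := k.cast_nonneg (α := ℝ)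
  have hkl : 0 < (k : ℝ) + l + β + 1 := by linarith
  have hle : ((l : ℝ) + 1) * (l + β + 1) ≤ (k + l + 1) * (k + l + β + 1) := by
    gcongr <;> linarith
  refine le_of_mul_le_mul_right ?_ hkl
  calc (k + l + α + 1) * jacobiCoeff α β k l * (k + l + β + 1)
      = (l + 1) * (l + β + 1) * jacobiCoeff α β k (l + 1) := by
        rw [jacobiCoeff_succ_right hα hβ]; ring
    _ ≤ (k + l + 1) * (k + l + β + 1) * jacobiCoeff α β k (l + 1) := by gcongr
    _ = _ := by ring

theorem add_mul_eval_jacobiP_le (hα : -1 < α) (hβ : -1 < β) (n : ℕ) {x : ℝ} (hx : 1 ≤ x) :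
    (n + α + 1) * (jacobiP α β n).eval x ≤ (n + 1) * (jacobiP α β (n + 1)).eval x := by
  have : 0 ≤ (x - 1) / 2 := by linarith
  have hv : 1 ≤ (x + 1) / 2 := by linarith
  have : 0 ≤ (x + 1) / 2 := by linarith
  rw [eval_jacobiP, eval_jacobiP, Finset.Nat.sum_antidiagonal_succ', mul_add, Finset.mul_sum,
    Finset.mul_sum]
  refine le_add_of_nonneg_of_le ?_ (Finset.sum_le_sum fun p hp => ?_)
  · have := jacobiCoeff_pos hα hβ (n + 1) 0
    positivity
  · have hn : (p.1 : ℝ) + p.2 = n := by exact_mod_cast mem_antidiagonal.1 hp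
    have hc := jacobiCoeff_pos hα hβ p.1 (p.2 + 1)
    rw [← hn, ← mul_assoc, ← mul_assoc (p.1 + p.2 + 1 : ℝ)]
    gcongr ?_ * (_ * ?_)
    · exact add_mul_jacobiCoeff_le hα hβ p.1 p.2
    · exact pow_le_pow_right₀ hv p.2.le_succ

theorem monotone_eval_jacobiP_div_eval_one (hα : -1 < α) (hβ : -1 < β) {x : ℝ} (hx : 1 ≤ x) :
    Monotone fun n => (jacobiP α β n).eval x / (jacobiP α β n).eval 1 := by
  refine monotone_nat_of_le_succ fun n => ?_
  have hn := eval_jacobiP_pos hα hβ n le_rfl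
  have hs := eval_jacobiP_pos hα hβ (n + 1) le_rfl
  rw [div_le_div_iff₀ hn hs]
  refine le_of_mul_le_mul_left ?_ n.cast_add_one_pos
  calc (n + 1) * ((jacobiP α β n).eval x * (jacobiP α β (n + 1)).eval 1)
      = (n + α + 1) * (jacobiP α β n).eval x * (jacobiP α β n).eval 1 := by
        rw [mul_left_comm, eval_jacobiP_succ_one hα hβ]; ring
    _ ≤ (n + 1) * (jacobiP α β (n + 1)).eval x * (jacobiP α β n).eval 1 := by
        gcongr ?_ * _
        exact add_mul_eval_jacobiP_le hα hβ n hx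
    _ = _ := by ring

end Expansion

/-! ### Derivatives -/

section Derivatives

variable {α β : ℝ}

theorem sum_fst_mul_jacobiCoeff (α : ℝ) (hβ : -1 < β) (F : ℕ → ℕ → ℝ[X]) (n : ℕ) :
    ∑ p ∈ antidiagonal (n + 1), C (p.1 * jacobiCoeff α β p.1 p.2) * F p.1 p.2 =
      ∑ p ∈ antidiagonal n,
        C ((p.2 + β + 1) * jacobiCoeff (α + 1) (β + 1) p.1 p.2) * F (p.1 + 1) p.2 := by
  simp only [Finset.Nat.sum_antidiagonal_succ, Nat.cast_zero, zero_mul, C_0, zero_add,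
    ← succ_mul_jacobiCoeff_succ_left α hβ, Nat.cast_succ]

theorem sum_snd_mul_jacobiCoeff (hα : -1 < α) (β : ℝ) (F : ℕ → ℕ → ℝ[X]) (n : ℕ) :
    ∑ p ∈ antidiagonal (n + 1), C (p.2 * jacobiCoeff α β p.1 p.2) * F p.1 p.2 =
      ∑ p ∈ antidiagonal n,
        C ((p.1 + α + 1) * jacobiCoeff (α + 1) (β + 1) p.1 p.2) * F p.1 (p.2 + 1) := by
  simp only [Finset.Nat.sum_antidiagonal_succ', Nat.cast_zero, zero_mul, C_0, zero_add,
    ← succ_mul_jacobiCoeff_succ_right hα β, Nat.cast_succ]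

theorem derivative_jacobiBasis (k l : ℕ) :
    derivative (jacobiBasis k l) =
      C 2⁻¹ * (C (k : ℝ) * jacobiBasis (k - 1) l + C (l : ℝ) * jacobiBasis k (l - 1)) := by
  simp only [jacobiBasis, derivative_mul, derivative_pow, derivative_C, derivative_sub,
    derivative_add, derivative_X, derivative_one]
  ring

theorem derivative_jacobiP_succ (hα : -1 < α) (hβ : -1 < β) (n : ℕ) :
    derivative (jacobiP α β (n + 1)) =
      C ((n + α + β + 2) / 2) * jacobiP (α + 1) (β + 1) n := by
  calc derivative (jacobiP α β (n + 1))
      = C 2⁻¹ * (∑ p ∈ antidiagonal (n + 1),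
            C (p.1 * jacobiCoeff α β p.1 p.2) * jacobiBasis (p.1 - 1) p.2 +
          ∑ p ∈ antidiagonal (n + 1),
            C (p.2 * jacobiCoeff α β p.1 p.2) * jacobiBasis p.1 (p.2 - 1)) := by
        rw [jacobiP_eq_sum_antidiagonal, derivative_sum, ← Finset.sum_add_distrib, Finset.mul_sum]
        refine Finset.sum_congr rfl fun p _ => ?_
        rw [derivative_C_mul, derivative_jacobiBasis, C_mul, C_mul]
        ring
    _ = C 2⁻¹ * ∑ p ∈ antidiagonal n,
          C ((n + α + β + 2) * jacobiCoeff (α + 1) (β + 1) p.1 p.2) * jacobiBasis p.1 p.2 := by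
        rw [sum_fst_mul_jacobiCoeff α hβ fun k l => jacobiBasis (k - 1) l,
          sum_snd_mul_jacobiCoeff hα β fun k l => jacobiBasis k (l - 1), ← Finset.sum_add_distrib]
        congr 1
        refine Finset.sum_congr rfl fun p hp => ?_
        have hn : (p.1 : ℝ) + p.2 = n := by exact_mod_cast mem_antidiagonal.1 hp
        rw [Nat.add_sub_cancel, Nat.add_sub_cancel, ← add_mul, ← C_add, ← hn]
        congr 2
        ring
    _ = C ((n + α + β + 2) / 2) * jacobiP (α + 1) (β + 1) n := by
        simp only [C_mul, mul_assoc, ← Finset.mul_sum, ← jacobiP_eq_sum_antidiagonal,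
          div_eq_inv_mul]

theorem iterate_derivative_jacobiP_one_isBigO (j : ℕ) (hα : -1 < α) (hβ : -1 < β) :
    (fun n => (derivative^[j] (jacobiP α β n)).eval 1) =O[atTop]
      fun n : ℕ => (n : ℝ) ^ (α + 2 * j) := by
  induction j generalizing α β with
  | zero => simpa using (isTheta_eval_jacobiP_one hα hβ).isBigO
  | succ j ih =>
    refine isBigO_natCast_rpow_of_succ ?_
    have hfactor : (fun n : ℕ => (n + α + β + 2) / 2) =O[atTop] fun n : ℕ => (n : ℝ) ^ (1 : ℝ) := by
      simpa only [Real.rpow_one, mul_comm (2⁻¹ : ℝ), ← div_eq_mul_inv, add_assoc] using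
        (isEquivalent_natCast_add (α + (β + 2))).isBigO.const_mul_left 2⁻¹
    have hmul := hfactor.mul (ih (α := α + 1) (β := β + 1) (by linarith) (by linarith))
    have hexp : α + 2 * (j + 1 : ℕ) = 1 + (α + 1 + 2 * j) := by push_cast; ring
    rw [hexp]
    refine (hmul.congr_left fun n => ?_).trans_eventuallyEq (natCast_rpow_mul_eventuallyEq _ _)
    rw [Function.iterate_succ_apply, derivative_jacobiP_succ hα hβ, iterate_derivative_C_mul,
      eval_C_mul]

theorem one_sub_X_sq_mul_derivative_jacobiBasis (k l : ℕ) :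
    (1 - X ^ 2) * derivative (jacobiBasis k l) =
      -C 2 * (C (k : ℝ) * jacobiBasis k (l + 1) + C (l : ℝ) * jacobiBasis (k + 1) l) := by
  refine Polynomial.funext fun x => ?_
  simp only [derivative_jacobiBasis, eval_mul, eval_sub, eval_add, eval_neg, eval_pow, eval_one,
    eval_X, eval_C, eval_jacobiBasis]
  rcases k with _ | k <;> rcases l with _ | l <;> push_cast [Nat.add_sub_cancel] <;> ring

theorem jacobiBasis_raising (a b : ℝ) (k l : ℕ) :
    (1 - X ^ 2) * derivative (jacobiBasis k l) +
      (C b * (1 - X) - C a * (1 + X)) * jacobiBasis k l =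
      -C 2 * (C (l + b) * jacobiBasis (k + 1) l + C (k + a) * jacobiBasis k (l + 1)) := by
  rw [one_sub_X_sq_mul_derivative_jacobiBasis]
  refine Polynomial.funext fun x => ?_
  simp only [eval_mul, eval_sub, eval_add, eval_neg, eval_one, eval_X, eval_C, eval_jacobiBasis]
  ring

theorem jacobiP_raising (hα : -1 < α) (hβ : -1 < β) (n : ℕ) :
    (1 - X ^ 2) * derivative (jacobiP (α + 1) (β + 1) n) +
      (C (β + 1) * (1 - X) - C (α + 1) * (1 + X)) * jacobiP (α + 1) (β + 1) n =
      -C (2 * (n + 1 : ℝ)) * jacobiP α β (n + 1) := by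
  calc (1 - X ^ 2) * derivative (jacobiP (α + 1) (β + 1) n) +
        (C (β + 1) * (1 - X) - C (α + 1) * (1 + X)) * jacobiP (α + 1) (β + 1) n
      = -C 2 * (∑ p ∈ antidiagonal n, C ((p.2 + β + 1) * jacobiCoeff (α + 1) (β + 1) p.1 p.2) *
            jacobiBasis (p.1 + 1) p.2 +
          ∑ p ∈ antidiagonal n, C ((p.1 + α + 1) * jacobiCoeff (α + 1) (β + 1) p.1 p.2) *
            jacobiBasis p.1 (p.2 + 1)) := by
        rw [jacobiP_eq_sum_antidiagonal, derivative_sum, Finset.mul_sum, Finset.mul_sum,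
          ← Finset.sum_add_distrib, ← Finset.sum_add_distrib, Finset.mul_sum]
        refine Finset.sum_congr rfl fun p _ => ?_
        have h := jacobiBasis_raising (α + 1) (β + 1) p.1 p.2
        rw [derivative_C_mul, C_mul, C_mul, add_assoc _ β, add_assoc _ α]
        linear_combination C (jacobiCoeff (α + 1) (β + 1) p.1 p.2) * h
    _ = -C 2 * ∑ p ∈ antidiagonal (n + 1),
          C ((n + 1) * jacobiCoeff α β p.1 p.2) * jacobiBasis p.1 p.2 := by
        rw [← sum_fst_mul_jacobiCoeff α hβ, ← sum_snd_mul_jacobiCoeff hα β,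
          ← Finset.sum_add_distrib]
        congr 1
        refine Finset.sum_congr rfl fun p hp => ?_
        have hn : (p.1 : ℝ) + p.2 = n + 1 := by exact_mod_cast mem_antidiagonal.1 hp
        rw [← hn, ← add_mul, ← C_add, ← add_mul]
    _ = -C (2 * (n + 1 : ℝ)) * jacobiP α β (n + 1) := by
        simp only [C_mul, mul_assoc, ← Finset.mul_sum, ← jacobiP_eq_sum_antidiagonal, neg_mul]

end Derivatives

/-! ### Norms -/

section Norms

variable {α β : ℝ}

/-- The Jacobi weight `(1 - x) ^ α * (1 + x) ^ β`, used on `[-1, 1]`. -/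
noncomputable def jacobiWeight (α β x : ℝ) : ℝ := (1 - x) ^ α * (1 + x) ^ β

theorem integral_rpow_mul_one_sub_rpow (hα : -1 < α) (hβ : -1 < β) :
    ∫ t in (0 : ℝ)..1, t ^ α * (1 - t) ^ β = ProbabilityTheory.beta (α + 1) (β + 1) := by
  rw [ProbabilityTheory.beta_eq_betaIntegralReal _ _ (by linarith) (by linarith),
    Complex.betaIntegral, ← Complex.ofReal_re (∫ t in (0 : ℝ)..1, t ^ α * (1 - t) ^ β),
    ← intervalIntegral.integral_ofReal]
  congr 1
  refine intervalIntegral.integral_congr fun t ht => ?_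
  rw [Set.uIcc_of_le zero_le_one] at ht
  simp [Complex.ofReal_cpow ht.1, Complex.ofReal_cpow (sub_nonneg.2 ht.2)]

theorem integral_jacobiWeight (hα : -1 < α) (hβ : -1 < β) :
    ∫ x in (-1 : ℝ)..1, jacobiWeight α β x =
      2 ^ (α + β + 1) * ProbabilityTheory.beta (α + 1) (β + 1) := by
  have hsubst := intervalIntegral.mul_integral_comp_sub_mul (a := 0) (b := 1)
    (f := jacobiWeight α β) 2 1
  have hscale : ∫ t in (0 : ℝ)..1, jacobiWeight α β (1 - 2 * t) =
      ∫ t in (0 : ℝ)..1, 2 ^ (α + β) * (t ^ α * (1 - t) ^ β) := by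
    refine intervalIntegral.integral_congr fun t ht => ?_
    rw [Set.uIcc_of_le zero_le_one] at ht
    have h1 : 1 - (1 - 2 * t) = 2 * t := by ring
    have h2 : 1 + (1 - 2 * t) = 2 * (1 - t) := by ring
    simp only [jacobiWeight]
    rw [h1, h2, Real.mul_rpow zero_le_two ht.1, Real.mul_rpow zero_le_two (sub_nonneg.2 ht.2),
      Real.rpow_add two_pos]
    ring
  rw [mul_zero, sub_zero, show (1 : ℝ) - 2 * 1 = -1 by norm_num] at hsubst
  rw [← hsubst, hscale, intervalIntegral.integral_const_mul, integral_rpow_mul_one_sub_rpow hα hβ,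
    Real.rpow_add_one two_ne_zero]
  ring

theorem intervalIntegrable_jacobiWeight (hα : -1 < α) (hβ : -1 < β) :
    IntervalIntegrable (jacobiWeight α β) MeasureTheory.volume (-1) 1 := by
  by_contra h
  have hpos : 0 < 2 ^ (α + β + 1) * ProbabilityTheory.beta (α + 1) (β + 1) :=
    mul_pos (by positivity) (ProbabilityTheory.beta_pos (by linarith) (by linarith))
  exact hpos.ne (by rw [← integral_jacobiWeight hα hβ, intervalIntegral.integral_undef h])

theorem intervalIntegrable_eval_mul_jacobiWeight (hα : -1 < α) (hβ : -1 < β) (p : ℝ[X]) :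
    IntervalIntegrable (fun x => p.eval x * jacobiWeight α β x) MeasureTheory.volume (-1) 1 :=
  (intervalIntegrable_jacobiWeight hα hβ).continuousOn_mul p.continuous.continuousOn

theorem integral_C_mul_sub_C_mul_jacobiWeight (hα : -1 < α) (hβ : -1 < β) (a b : ℝ) (p q : ℝ[X]) :
    ∫ x in (-1 : ℝ)..1, (C a * p - C b * q).eval x * jacobiWeight α β x =
      a * (∫ x in (-1 : ℝ)..1, p.eval x * jacobiWeight α β x) -
        b * ∫ x in (-1 : ℝ)..1, q.eval x * jacobiWeight α β x := by
  simp only [eval_sub, eval_C_mul, sub_mul, mul_assoc]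
  rw [intervalIntegral.integral_sub, intervalIntegral.integral_const_mul,
    intervalIntegral.integral_const_mul]
  all_goals exact (intervalIntegrable_eval_mul_jacobiWeight hα hβ _).const_mul _

theorem jacobiWeight_add_one (hα : -1 < α) (hβ : -1 < β) {x : ℝ} (hx : x ∈ Set.Icc (-1) 1) :
    jacobiWeight (α + 1) (β + 1) x = (1 - x ^ 2) * jacobiWeight α β x := by
  rw [jacobiWeight, jacobiWeight, Real.rpow_add_one' (by linarith [hx.2]) (by linarith),
    Real.rpow_add_one' (by linarith [hx.1]) (by linarith)]
  ring

theorem continuous_jacobiWeight (hα : 0 ≤ α) (hβ : 0 ≤ β) : Continuous (jacobiWeight α β) :=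
  ((continuous_const.sub continuous_id).rpow_const fun _ => .inr hα).mul
    ((continuous_const.add continuous_id).rpow_const fun _ => .inr hβ)

theorem hasDerivAt_jacobiWeight_add_one {x : ℝ} (hx : x ∈ Set.Ioo (-1) 1) :
    HasDerivAt (jacobiWeight (α + 1) (β + 1))
      (((β + 1) * (1 - x) - (α + 1) * (1 + x)) * jacobiWeight α β x) x := by
  have h1 : 1 - x ≠ 0 := by linarith [hx.2]
  have h2 : 1 + x ≠ 0 := by linarith [hx.1]
  have hderiv := (((hasDerivAt_id x).const_sub 1).rpow_const (p := α + 1) (.inl h1)).mul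
    (((hasDerivAt_id x).const_add 1).rpow_const (p := β + 1) (.inl h2))
  refine hderiv.congr_deriv ?_
  simp only [jacobiWeight, id, add_sub_cancel_right, Real.rpow_add_one h1, Real.rpow_add_one h2]
  ring

-- The integrand is the derivative of `f` times the weight with parameters `α + 1` and `β + 1`,
-- which vanishes at both endpoints.
theorem integral_pearson_mul_jacobiWeight (hα : -1 < α) (hβ : -1 < β) (f : ℝ[X]) :
    ∫ x in (-1 : ℝ)..1, ((1 - X ^ 2) * derivative f +
      (C (β + 1) * (1 - X) - C (α + 1) * (1 + X)) * f).eval x * jacobiWeight α β x = 0 := by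
  have hcont : Continuous fun x => f.eval x * jacobiWeight (α + 1) (β + 1) x :=
    f.continuous.mul (continuous_jacobiWeight (by linarith) (by linarith))
  have hderiv : ∀ x ∈ Set.Ioo (-1 : ℝ) 1,
      HasDerivAt (fun x => f.eval x * jacobiWeight (α + 1) (β + 1) x)
        (((1 - X ^ 2) * derivative f +
          (C (β + 1) * (1 - X) - C (α + 1) * (1 + X)) * f).eval x * jacobiWeight α β x) x := by
    intro x hx
    refine ((f.hasDerivAt x).mul (hasDerivAt_jacobiWeight_add_one hx)).congr_deriv ?_
    rw [jacobiWeight_add_one hα hβ (Set.Ioo_subset_Icc_self hx)]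
    simp only [eval_add, eval_mul, eval_sub, eval_pow, eval_X, eval_C, eval_one]
    ring
  rw [intervalIntegral.integral_eq_sub_of_hasDerivAt_of_le (by norm_num) hcont.continuousOn hderiv
    (intervalIntegrable_eval_mul_jacobiWeight hα hβ _)]
  simp [jacobiWeight, Real.zero_rpow (by linarith : α + 1 ≠ 0),
    Real.zero_rpow (by linarith : β + 1 ≠ 0)]

theorem jacobiNormSq_eq_integral (α β : ℝ) (n : ℕ) :
    jacobiNormSq α β n =
      ∫ x in (-1 : ℝ)..1, (jacobiP α β n ^ 2).eval x * jacobiWeight α β x := by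
  simp only [jacobiNormSq, jacobiWeight, eval_pow, mul_assoc]

theorem jacobiNormSq_nonneg (α β : ℝ) (n : ℕ) : 0 ≤ jacobiNormSq α β n := by
  refine intervalIntegral.integral_nonneg (by norm_num) fun x hx => ?_
  have := sub_nonneg.2 hx.2
  have := neg_le_iff_add_nonneg'.1 hx.1
  positivity

theorem jacobiNormSq_add_one_eq_integral (hα : -1 < α) (hβ : -1 < β) (n : ℕ) :
    jacobiNormSq (α + 1) (β + 1) n = ∫ x in (-1 : ℝ)..1,
      ((1 - X ^ 2) * jacobiP (α + 1) (β + 1) n ^ 2).eval x * jacobiWeight α β x := by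
  rw [jacobiNormSq_eq_integral]
  refine intervalIntegral.integral_congr fun x hx => ?_
  rw [Set.uIcc_of_le (by norm_num)] at hx
  simp only [jacobiWeight_add_one hα hβ hx, eval_mul, eval_sub, eval_pow, eval_one, eval_X]
  ring

theorem jacobiNormSq_succ (hα : -1 < α) (hβ : -1 < β) (n : ℕ) :
    4 * (n + 1) * jacobiNormSq α β (n + 1) =
      (n + α + β + 2) * jacobiNormSq (α + 1) (β + 1) n := by
  have hpoly : (1 - X ^ 2) * derivative (jacobiP (α + 1) (β + 1) n * jacobiP α β (n + 1)) +
      (C (β + 1) * (1 - X) - C (α + 1) * (1 + X)) *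
        (jacobiP (α + 1) (β + 1) n * jacobiP α β (n + 1)) =
      C ((n + α + β + 2) / 2) * ((1 - X ^ 2) * jacobiP (α + 1) (β + 1) n ^ 2) -
        C (2 * (n + 1 : ℝ)) * jacobiP α β (n + 1) ^ 2 := by
    rw [derivative_mul, derivative_jacobiP_succ hα hβ]
    linear_combination jacobiP α β (n + 1) * jacobiP_raising hα hβ n
  have hint := integral_pearson_mul_jacobiWeight hα hβ
    (jacobiP (α + 1) (β + 1) n * jacobiP α β (n + 1))
  rw [hpoly, integral_C_mul_sub_C_mul_jacobiWeight hα hβ, ← jacobiNormSq_add_one_eq_integral hα hβ,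
    ← jacobiNormSq_eq_integral] at hint
  linarith

theorem jacobiNormSq_zero (hα : -1 < α) (hβ : -1 < β) :
    jacobiNormSq α β 0 = 2 ^ (α + β + 1) * ProbabilityTheory.beta (α + 1) (β + 1) := by
  have hP : jacobiP α β 0 = 1 := by
    have h1 := (Gamma_natCast_add_add_one_pos hα 0).ne'
    have h2 := (Gamma_natCast_add_add_one_pos hβ 0).ne'
    simp only [Nat.cast_zero, zero_add] at h1 h2
    simp [jacobiP_eq_sum_antidiagonal, jacobiBasis, jacobiCoeff, h1, h2]
  rw [jacobiNormSq_eq_integral, hP, ← integral_jacobiWeight hα hβ]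
  simp

theorem two_rpow_add_one_add_add_one (α β : ℝ) :
    (2 : ℝ) ^ (α + 1 + (β + 1) + 1) = 4 * 2 ^ (α + β + 1) := by
  have hexp : α + 1 + (β + 1) + 1 = α + β + 1 + 2 := by ring
  rw [hexp, Real.rpow_add two_pos]
  norm_num [mul_comm]

theorem jacobiNormSq_zero_mul_Gamma (hα : -1 < α) (hβ : -1 < β) :
    jacobiNormSq α β 0 * Real.Gamma (α + β + 2) =
      2 ^ (α + β + 1) * (Real.Gamma (α + 1) * Real.Gamma (β + 1)) := by
  have hΓ : Real.Gamma (α + β + 2) ≠ 0 := (Real.Gamma_pos_of_pos (by linarith)).ne'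
  have harg : α + 1 + (β + 1) = α + β + 2 := by ring
  rw [jacobiNormSq_zero hα hβ, ProbabilityTheory.beta, harg, mul_assoc, div_mul_cancel₀ _ hΓ]

theorem jacobiNormSq_one_mul (hα : -1 < α) (hβ : -1 < β) :
    jacobiNormSq α β 1 * ((α + β + 3) * Real.Gamma (α + β + 2)) =
      2 ^ (α + β + 1) * (Real.Gamma (α + 2) * Real.Gamma (β + 2)) := by
  have hrec := jacobiNormSq_succ hα hβ 0
  have hzero := jacobiNormSq_zero_mul_Gamma (α := α + 1) (β := β + 1) (by linarith) (by linarith)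
  have hΓ : Real.Gamma (α + 1 + (β + 1) + 2) =
      (α + β + 3) * ((α + β + 2) * Real.Gamma (α + β + 2)) := by
    rw [← Real.Gamma_add_one (by linarith), show α + β + 3 = α + β + 2 + 1 by ring,
      ← Real.Gamma_add_one (by linarith)]
    ring_nf
  rw [two_rpow_add_one_add_add_one, hΓ, add_assoc α 1 1, add_assoc β 1 1,
    one_add_one_eq_two] at hzero
  simp only [Nat.cast_zero, zero_add, mul_one] at hrec
  linear_combination (α + β + 3) * Real.Gamma (α + β + 2) / 4 * hrec + hzero / 4

theorem jacobiNormSq_succ_mul (hα : -1 < α) (hβ : -1 < β) (n : ℕ) :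
    jacobiNormSq α β (n + 1) *
        ((n + 1).factorial * (2 * n + α + β + 3) * Real.Gamma (n + α + β + 2)) =
      2 ^ (α + β + 1) * (Real.Gamma (n + α + 2) * Real.Gamma (n + β + 2)) := by
  induction n generalizing α β with
  | zero => simpa using jacobiNormSq_one_mul hα hβ
  | succ n ih =>
    have hrec := jacobiNormSq_succ hα hβ (n + 1)
    have hprev := ih (α := α + 1) (β := β + 1) (by linarith) (by linarith)
    have hΓ : Real.Gamma (n + (α + 1) + (β + 1) + 2) =
        (n + α + β + 3) * Real.Gamma (n + α + β + 3) := by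
      rw [← Real.Gamma_add_one (by linarith [n.cast_nonneg (α := ℝ)])]
      ring_nf
    have harg (s : ℝ) : ((n + 1 : ℕ) : ℝ) + s + 2 = n + (s + 1) + 2 := by push_cast; ring
    have harg' : ((n + 1 : ℕ) : ℝ) + α + β + 2 = n + α + β + 3 := by push_cast; ring
    rw [two_rpow_add_one_add_add_one, hΓ] at hprev
    rw [harg'] at hrec
    rw [harg, harg, harg', Nat.factorial_succ (n + 1)]
    push_cast at hrec ⊢
    linear_combination ((n + 1).factorial : ℝ) * (2 * n + α + β + 5) *
      Real.Gamma (n + α + β + 3) / 4 * hrec + hprev / 4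

theorem inv_jacobiNormSq_succ (hα : -1 < α) (hβ : -1 < β) (n : ℕ) :
    (jacobiNormSq α β (n + 1))⁻¹ =
      (2 ^ (α + β + 1))⁻¹ * ((n + 1) * (2 * n + (α + β + 3)) *
        (n.factorial * Real.Gamma (n + (α + β + 2)) /
          (Real.Gamma (n + (α + 2)) * Real.Gamma (n + (β + 2))))) := by
  have := n.cast_nonneg (α := ℝ)
  have h1 := (Real.Gamma_pos_of_pos (by linarith : 0 < n + (α + 2))).ne'
  have h2 := (Real.Gamma_pos_of_pos (by linarith : 0 < n + (β + 2))).ne'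
  have h := jacobiNormSq_succ_mul hα hβ n
  simp only [add_assoc] at h ⊢
  refine inv_eq_of_mul_eq_one_right ?_
  field_simp
  rw [Nat.factorial_succ] at h
  push_cast at h
  linear_combination h

theorem factorial_mul_Gamma_div_Gamma_mul_Gamma_isBigO (α β : ℝ) :
    (fun n : ℕ => n.factorial * Real.Gamma (n + (α + β + 2)) /
      (Real.Gamma (n + (α + 2)) * Real.Gamma (n + (β + 2)))) =O[atTop]
        fun n : ℕ => (n : ℝ) ^ (-1 : ℝ) := by
  refine (((IsEquivalent.refl (u := fun n : ℕ => (n.factorial : ℝ))).mul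
    (isEquivalent_Gamma_natCast_add (α + β + 2))).div
      ((isEquivalent_Gamma_natCast_add (α + 2)).mul
        (isEquivalent_Gamma_natCast_add (β + 2)))).isBigO.trans_eventuallyEq ?_
  filter_upwards [eventually_gt_atTop 0] with n hn
  have hn' : (0 : ℝ) < n := by exact_mod_cast hn
  have hexp : α + β + 2 - 1 = -1 + (α + 2 - 1) + (β + 2 - 1) := by ring
  simp only [Pi.div_apply, Pi.mul_apply]
  rw [hexp, Real.rpow_add hn', Real.rpow_add hn']
  field_simp

theorem inv_jacobiNormSq_isBigO (hα : -1 < α) (hβ : -1 < β) :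
    (fun n => (jacobiNormSq α β n)⁻¹) =O[atTop] fun n : ℕ => (n : ℝ) ^ (1 : ℝ) := by
  refine isBigO_natCast_rpow_of_succ ?_
  have hlin (c : ℝ) : (fun n : ℕ => (n : ℝ) + c) =O[atTop] fun n : ℕ => (n : ℝ) ^ (1 : ℝ) := by
    simpa only [Real.rpow_one] using (isEquivalent_natCast_add c).isBigO
  have hlin' : (fun n : ℕ => 2 * (n : ℝ) + (α + β + 3)) =O[atTop]
      fun n : ℕ => (n : ℝ) ^ (1 : ℝ) := by
    refine ((hlin ((α + β + 3) / 2)).const_mul_left 2).congr_left fun n => ?_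
    ring
  simp only [inv_jacobiNormSq_succ hα hβ]
  refine ((((hlin 1).mul hlin').mul
    (factorial_mul_Gamma_div_Gamma_mul_Gamma_isBigO α β)).const_mul_left _).trans_eventuallyEq ?_
  filter_upwards [eventually_gt_atTop 0] with n hn
  rw [Real.rpow_one, Real.rpow_neg_one]
  field_simp

end Norms

/-! ### Zeros of the Jacobi–Sobolev polynomials -/

section Zeros

variable {α β : ℝ}

theorem monotone_abs_eval_jacobiP_div_of_one_le (hα : -1 < α) (hβ : -1 < β) {x : ℝ} (hx : 1 ≤ x) :
    Monotone fun n => |(jacobiP α β n).eval x| / (jacobiP α β n).eval 1 := by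
  simpa only [abs_of_pos (eval_jacobiP_pos hα hβ _ hx)] using
    monotone_eval_jacobiP_div_eval_one hα hβ hx

theorem monotone_abs_eval_jacobiP_div_of_le_neg_one (hα : -1 < α) (hβ : -1 < β) {x : ℝ}
    (hx : x ≤ -1) : Monotone fun n => |(jacobiP α β n).eval x| / (jacobiP β α n).eval 1 := by
  simpa only [← abs_eval_jacobiP_neg α β, neg_neg] using
    monotone_abs_eval_jacobiP_div_of_one_le hβ hα (le_neg_of_le_neg hx)

theorem eval_jacobiP_ne_zero (hα : -1 < α) (hβ : -1 < β) (n : ℕ) {x : ℝ} (hx : 1 ≤ |x|) :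
    (jacobiP α β n).eval x ≠ 0 := by
  rcases le_abs.1 hx with hx | hx
  · exact (eval_jacobiP_pos hα hβ n hx).ne'
  · rw [← abs_ne_zero, ← neg_neg x, abs_eval_jacobiP_neg, abs_ne_zero]
    exact (eval_jacobiP_pos hβ hα n hx).ne'

theorem kernK_self_nonneg (α β : ℝ) (j n : ℕ) (x : ℝ) : 0 ≤ kernK α β j j n x x :=
  Finset.sum_nonneg fun i _ => div_nonneg (mul_self_nonneg _) (jacobiNormSq_nonneg α β i)

theorem abs_eval_kernKPoly_le (j n : ℕ) {r : ℕ → ℝ} (hr : ∀ i, 0 < r i) {x : ℝ}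
    (hmono : Monotone fun i => |(jacobiP α β i).eval x| / r i) :
    |(kernKPoly α β j n).eval x| ≤
      (∑ i ∈ Finset.range (n + 1),
        |(derivative^[j] (jacobiP α β i)).eval 1| * (jacobiNormSq α β i)⁻¹ * r i) *
          (|(jacobiP α β (n + 1)).eval x| / r (n + 1)) := by
  simp only [kernKPoly, eval_finsetSum, eval_C_mul]
  rw [Finset.sum_mul]
  refine (Finset.abs_sum_le_sum_abs _ _).trans (Finset.sum_le_sum fun i hi => ?_)
  have hN := inv_nonneg.2 (jacobiNormSq_nonneg α β i)
  calc |(derivative^[j] (jacobiP α β i)).eval 1 / jacobiNormSq α β i * (jacobiP α β i).eval x|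
      = |(derivative^[j] (jacobiP α β i)).eval 1| * (jacobiNormSq α β i)⁻¹ * r i *
          (|(jacobiP α β i).eval x| / r i) := by
        rw [abs_mul, div_eq_mul_inv, abs_mul, abs_of_nonneg hN, mul_assoc _ (r i),
          mul_div_cancel₀ _ (hr i).ne']
    _ ≤ _ := by
        have := (hr i).le
        gcongr ?_ * ?_
        exact hmono (Finset.mem_range.1 hi).le

theorem eval_sobQ_ne_zero {j n : ℕ} {Ms : ℕ → ℝ} {x B : ℝ} (hMs : 0 ≤ Ms n)
    (hP : (jacobiP α β n).eval x ≠ 0)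
    (hB : |(kernKPoly α β j (n - 1)).eval x| ≤ B * |(jacobiP α β n).eval x|)
    (hlt : Ms n * |(derivative^[j] (jacobiP α β n)).eval 1| * B < 1) :
    (sobQ α β j Ms n).eval x ≠ 0 := by
  intro hzero
  have hden : 1 ≤ 1 + Ms n * kernK α β j j (n - 1) 1 1 :=
    le_add_of_nonneg_right (mul_nonneg hMs (kernK_self_nonneg α β j (n - 1) 1))
  rw [sobQ, eval_sub, eval_C_mul, sub_eq_zero] at hzero
  refine lt_irrefl |(jacobiP α β n).eval x| ?_
  calc |(jacobiP α β n).eval x|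
      = Ms n * |(derivative^[j] (jacobiP α β n)).eval 1| /
          (1 + Ms n * kernK α β j j (n - 1) 1 1) * |(kernKPoly α β j (n - 1)).eval x| := by
        rw [hzero, abs_mul, abs_div, abs_mul, abs_of_nonneg hMs,
          abs_of_pos (zero_lt_one.trans_le hden)]
    _ ≤ Ms n * |(derivative^[j] (jacobiP α β n)).eval 1| * (B * |(jacobiP α β n).eval x|) := by
        gcongr
        exact div_le_self (by positivity) hden
    _ < |(jacobiP α β n).eval x| := by
        rw [← mul_assoc]
        exact mul_lt_of_lt_one_left (abs_pos.2 hP) hlt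

theorem sum_abs_iterate_derivative_jacobiP_one_mul_isBigO (hα : -1 < α) (hβ : -1 < β) (j : ℕ)
    {r : ℕ → ℝ} {ρ : ℝ} (hρ : -1 < ρ) (hr : r =O[atTop] fun n : ℕ => (n : ℝ) ^ ρ) :
    (fun n => ∑ i ∈ Finset.range n,
      |(derivative^[j] (jacobiP α β i)).eval 1| * (jacobiNormSq α β i)⁻¹ * r i) =O[atTop]
        fun n : ℕ => (n : ℝ) ^ (α + 2 * j + 1 + ρ + 1) := by
  have hkern := ((iterate_derivative_jacobiP_one_isBigO j hα hβ).norm_left.mul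
    (inv_jacobiNormSq_isBigO hα hβ)).trans_eventuallyEq (natCast_rpow_mul_eventuallyEq _ _)
  exact isBigO_sum_range_natCast_rpow (by linarith [j.cast_nonneg (α := ℝ)])
    ((hkern.mul hr).trans_eventuallyEq (natCast_rpow_mul_eventuallyEq _ _))

theorem tendsto_mul_sum_div_zero (hα : -1 < α) (hβ : -1 < β) (j : ℕ) {r : ℕ → ℝ} {ρ : ℝ}
    (hρ : -1 < ρ) (hr : r =Θ[atTop] fun n : ℕ => (n : ℝ) ^ ρ) {Ms : ℕ → ℝ}
    (hlim : Tendsto (fun n : ℕ => Ms n * (n : ℝ) ^ (2 * (α + 2 * j + 1))) atTop (𝓝 0)) :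
    Tendsto (fun n => Ms n * |(derivative^[j] (jacobiP α β n)).eval 1| *
      ((∑ i ∈ Finset.range n,
        |(derivative^[j] (jacobiP α β i)).eval 1| * (jacobiNormSq α β i)⁻¹ * r i) / r n))
      atTop (𝓝 0) := by
  simp only [div_eq_mul_inv]
  refine IsBigO.trans_tendsto ?_ hlim
  refine ((((isBigO_refl Ms atTop).mul
    (iterate_derivative_jacobiP_one_isBigO j hα hβ).norm_left).mul
      ((sum_abs_iterate_derivative_jacobiP_one_mul_isBigO hα hβ j hρ hr.isBigO).mul
        hr.inv.isBigO))).trans_eventuallyEq ?_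
  filter_upwards [eventually_gt_atTop 0] with n hn
  have hn' : (0 : ℝ) < n := by exact_mod_cast hn
  rw [← Real.rpow_neg hn'.le, ← Real.rpow_add hn', mul_assoc, ← Real.rpow_add hn']
  congr 2
  ring

theorem eventually_eval_sobQ_ne_zero (hα : -1 < α) (hβ : -1 < β) (j : ℕ) {r : ℕ → ℝ} {ρ : ℝ}
    (hρ : -1 < ρ) (hr : ∀ i, 0 < r i) (hrΘ : r =Θ[atTop] fun n : ℕ => (n : ℝ) ^ ρ) {Ms : ℕ → ℝ}
    (hMs : ∀ n, 0 ≤ Ms n)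
    (hlim : Tendsto (fun n : ℕ => Ms n * (n : ℝ) ^ (2 * (α + 2 * j + 1))) atTop (𝓝 0)) :
    ∀ᶠ n in atTop, ∀ x, 1 ≤ |x| → Monotone (fun i => |(jacobiP α β i).eval x| / r i) →
      (sobQ α β j Ms n).eval x ≠ 0 := by
  filter_upwards [(tendsto_mul_sum_div_zero hα hβ j hρ hrΘ hlim).eventually_lt_const one_pos,
    eventually_ge_atTop 1] with n hlt hn x hx hmono
  refine eval_sobQ_ne_zero (hMs n) (eval_jacobiP_ne_zero hα hβ n hx) ?_ hlt
  have hkern := abs_eval_kernKPoly_le j (n - 1) hr hmono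
  rwa [Nat.sub_add_cancel hn, mul_div_assoc', ← div_mul_eq_mul_div] at hkern

theorem sobQ_zeros_inside_general (hα : -1 < α) (hβ : -1 < β) (j : ℕ) {Ms : ℕ → ℝ}
    (hMs : ∀ n, 0 ≤ Ms n)
    (hlim : Tendsto (fun n : ℕ => Ms n * (n : ℝ) ^ (2 * (α + 2 * j + 1))) atTop (𝓝 0)) :
    ∃ N : ℕ, ∀ n, N ≤ n → ∀ x : ℝ, (sobQ α β j Ms n).eval x = 0 → -1 < x ∧ x < 1 := by
  rw [← eventually_atTop]
  filter_upwards [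
    eventually_eval_sobQ_ne_zero hα hβ j hα (fun i => eval_jacobiP_pos hα hβ i le_rfl)
      (isTheta_eval_jacobiP_one hα hβ) hMs hlim,
    eventually_eval_sobQ_ne_zero hα hβ j hβ (fun i => eval_jacobiP_pos hβ hα i le_rfl)
      (isTheta_eval_jacobiP_one hβ hα) hMs hlim] with n hright hleft x hzero
  constructor
  · by_contra! hx
    exact hleft x (le_abs.2 (.inr (le_neg_of_le_neg hx)))
      (monotone_abs_eval_jacobiP_div_of_le_neg_one hα hβ hx) hzero
  · by_contra! hx
    exact hright x (le_abs.2 (.inl hx)) (monotone_abs_eval_jacobiP_div_of_one_le hα hβ hx) hzero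

end Zeros

/-- for `γ > 2(α+2j+1)` and `n` large, all real zeros of `Q_n`
lie in `(-1,1)`. -/
theorem sobQ_zeros_inside (α β : ℝ) (hα : -1 < α) (hβ : -1 < β) (j : ℕ) (hj : 1 ≤ j)
    (γ M : ℝ) (hM : 0 < M) (Ms : ℕ → ℝ) (hMs : ∀ n, 0 ≤ Ms n)
    (hlim : Filter.Tendsto (fun n : ℕ => Ms n * (n : ℝ) ^ γ) Filter.atTop (nhds M))
    (hγ : 2 * (α + 2 * j + 1) < γ) :
    ∃ N : ℕ, ∀ n, N ≤ n → ∀ x : ℝ, (sobQ α β j Ms n).eval x = 0 → -1 < x ∧ x < 1 :=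
  sobQ_zeros_inside_general hα hβ j hMs (tendsto_mul_natCast_rpow_zero hlim hγ)
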